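/- Let n ≥ 1 be an integer, let τ > 0, and let f be a nonnegative, not identically zero, sin^n-concave function on [0, τ] that attains its maximum at 0. Then for every real k ≥ 0 and every ε with 0 < ε ≤ π/2: (∫₀^{min(ε,τ)} f(t)·sin(t)^k dt) / (∫₀^{τ} f(t)·sin(t)^k dt) ≥ (∫₀^{ε} cos(t)^n·sin(t)^k dt) / (∫₀^{π/2} cos(t)^n·sin(t)^k dt). -/

import Mathlib

open Real Set

/-- A function `f` is `sin^N`-concave on a set `I ⊆ ℝ` if for all `x1, x2 ∈ I`,
`f((x1+x2)/2)^{1/N} ≥ (f(x1)^{1/N} + f(x2)^{1/N}) / (2 cos(|x2 − x1|/2))`. -/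
def SinConcaveOn (N : ℝ) (f : ℝ → ℝ) (I : Set ℝ) : Prop :=
  ∀ x1 ∈ I, ∀ x2 ∈ I,
    (f x1 ^ (1 / N) + f x2 ^ (1 / N)) / (2 * Real.cos (|x2 - x1| / 2))
      ≤ f ((x1 + x2) / 2) ^ (1 / N)

/-!
For `u = f ^ (1 / N)`, sin-concavity is the midpoint form of `u'' + u ≤ 0`. Subtracting the
sinusoid with the same values at two points `a < b`, `b - a < π`, and applying a minimum principle
shows that `u` lies above that sinusoid on `[a, b]`. Taking `a = 0`, where `u` is maximal, this
forces `u ≤ u 0 * cos`, hence `τ ≤ π / 2`, and then makes `u / cos`, so also `f / cos ^ N`,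
nonincreasing. If `F / G` is nonincreasing, then so is `(∫ F) / (∫ G)` as a function of the upper
endpoint, and the claim follows because `cos ^ N` lives on an interval at least as long as `f` does.
-/

/-- The midpoint form of the differential inequality `v'' + v ≤ 0`. For nonnegative `v` it says that
`v` is `sin^1`-concave at pairs of points closer than `π`; unlike `SinConcaveOn` it does not involve
powers, so that `v` may change sign. -/
def MidpointSinConcaveOn (v : ℝ → ℝ) (I : Set ℝ) : Prop :=
  ∀ x ∈ I, ∀ y ∈ I, |y - x| < π → v x + v y ≤ 2 * cos ((y - x) / 2) * v ((x + y) / 2)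

lemma exists_endpoint_midpoint_eq {a b z : ℝ} (hz : z ∈ Icc a b) :
    ∃ x y, (x = a ∨ x = b) ∧ y ∈ Icc a b ∧ (x + y) / 2 = z := by
  obtain ⟨haz, hzb⟩ := hz
  rcases le_total z ((a + b) / 2) with h | h
  · exact ⟨a, 2 * z - a, .inl rfl, ⟨by linarith, by linarith⟩, by ring⟩
  · exact ⟨b, 2 * z - b, .inr rfl, ⟨by linarith, by linarith⟩, by ring⟩

namespace MidpointSinConcaveOn

variable {u v : ℝ → ℝ} {I J : Set ℝ} {a b x y K τ : ℝ}

lemma mono (hv : MidpointSinConcaveOn v I) (hJI : J ⊆ I) : MidpointSinConcaveOn v J :=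
  fun x hx y hy ↦ hv x (hJI hx) y (hJI hy)

lemma sub_const_mul_sin (hv : MidpointSinConcaveOn v I) (A p : ℝ) :
    MidpointSinConcaveOn (fun x ↦ v x - A * sin (x - p)) I := by
  intro x hx y hy hxy
  have hsin : sin (x - p) + sin (y - p) = 2 * cos ((y - x) / 2) * sin ((x + y) / 2 - p) := by
    rw [show x - p = ((x + y) / 2 - p) - (y - x) / 2 by ring,
      show y - p = ((x + y) / 2 - p) + (y - x) / 2 by ring, sin_sub, sin_add]
    ring
  linear_combination hv x hx y hy hxy - A * hsin

-- The gain over the factor `m` comes from using `0 ≤ v x` instead of `m * cos (x - p) ≤ v x`.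
lemma mul_cos_midpoint_le (hv : MidpointSinConcaveOn v I) (hx : x ∈ I) (hy : y ∈ I)
    (hxy : |y - x| < π) {p m : ℝ} (hm : m ≤ 0) (hp : 0 ≤ cos (x - p)) (hvx : 0 ≤ v x)
    (hvy : m * cos (y - p) ≤ v y) :
    m * (1 - cos (x - p) / 2) * cos ((x + y) / 2 - p) ≤ v ((x + y) / 2) := by
  set d := (y - x) / 2
  set z := (x + y) / 2
  have hd : 0 < cos d := by
    rw [abs_lt] at hxy
    exact cos_pos_of_mem_Ioo ⟨by grind, by grind⟩
  have hcos : cos (x - p) + cos (y - p) = 2 * cos d * cos (z - p) := by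
    rw [show x - p = (z - p) - d by grind, show y - p = (z - p) + d by grind, cos_sub, cos_add]
    ring
  have hle : cos d * cos (z - p) ≤ 1 :=
    (le_abs_self _).trans <| by
      rw [abs_mul]
      exact mul_le_one₀ (abs_cos_le_one d) (abs_nonneg _) (abs_cos_le_one _)
  refine le_of_mul_le_mul_left ?_ (mul_pos two_pos hd)
  calc 2 * cos d * (m * (1 - cos (x - p) / 2) * cos (z - p))
      = m * (2 * cos d * cos (z - p)) + -m * cos (x - p) * (cos d * cos (z - p)) := by ring
    _ ≤ m * (2 * cos d * cos (z - p)) + -m * cos (x - p) * 1 := by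
        gcongr
        exact mul_nonneg (neg_nonneg.2 hm) hp
    _ = m * cos (y - p) := by rw [← hcos]; ring
    _ ≤ v x + v y := by linarith
    _ ≤ 2 * cos d * v z := hv x hx y hy hxy

lemma mul_cos_le_of_endpoints (hv : MidpointSinConcaveOn v (Icc a b)) (hab : b - a < π)
    (ha : 0 ≤ v a) (hb : 0 ≤ v b) {m : ℝ} (hm : m ≤ 0)
    (hvm : ∀ x ∈ Icc a b, m * cos (x - (a + b) / 2) ≤ v x) (hx : x ∈ Icc a b) :
    m * (1 - cos ((b - a) / 2) / 2) * cos (x - (a + b) / 2) ≤ v x := by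
  obtain ⟨e, y, he, hy, rfl⟩ := exists_endpoint_midpoint_eq hx
  have hle : a ≤ b := hy.1.trans hy.2
  obtain ⟨heI, hcos, hve⟩ :
      e ∈ Icc a b ∧ cos (e - (a + b) / 2) = cos ((b - a) / 2) ∧ 0 ≤ v e := by
    rcases he with rfl | rfl
    · exact ⟨left_mem_Icc.2 hle, by rw [← cos_neg]; ring_nf, ha⟩
    · exact ⟨right_mem_Icc.2 hle, by ring_nf, hb⟩
  have hdist : |y - e| < π := abs_lt.2 ⟨by linarith [hy.1, heI.2], by linarith [hy.2, heI.1]⟩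
  have hcos_nonneg : 0 ≤ cos (e - (a + b) / 2) :=
    hcos ▸ cos_nonneg_of_mem_Icc ⟨by linarith, by linarith⟩
  exact hcos ▸ hv.mul_cos_midpoint_le heI hy hdist hm hcos_nonneg hve (hvm y hy)

-- Iterating `mul_cos_le_of_endpoints` contracts a negative lower bound to `0`, so no continuity of
-- `v` is needed.
theorem nonneg_of_endpoints (hv : MidpointSinConcaveOn v (Icc a b)) (hab : b - a < π)
    (hK : ∀ x ∈ Icc a b, K ≤ v x) (ha : 0 ≤ v a) (hb : 0 ≤ v b) (hx : x ∈ Icc a b) :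
    0 ≤ v x := by
  have hle : a ≤ b := hx.1.trans hx.2
  set κ := cos ((b - a) / 2)
  set q := 1 - κ / 2 with hq_def
  have hκ : 0 < κ := cos_pos_of_mem_Ioo ⟨by linarith, by linarith⟩
  have hq : 0 ≤ q := by linarith [cos_le_one ((b - a) / 2)]
  set m := -|K| / κ
  have hm : m ≤ 0 := div_nonpos_of_nonpos_of_nonneg (neg_nonpos.2 (abs_nonneg K)) hκ.le
  have hκ_le : ∀ z ∈ Icc a b, κ ≤ cos (z - (a + b) / 2) := by
    intro z ⟨haz, hzb⟩
    rw [← cos_abs (z - (a + b) / 2)]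
    exact cos_le_cos_of_nonneg_of_le_pi (abs_nonneg _) (by linarith)
      (abs_le.2 ⟨by linarith, by linarith⟩)
  have hbound : ∀ j : ℕ, ∀ z ∈ Icc a b, m * q ^ j * cos (z - (a + b) / 2) ≤ v z := by
    intro j
    induction j with
    | zero =>
      intro z hz
      calc m * q ^ 0 * cos (z - (a + b) / 2) = m * cos (z - (a + b) / 2) := by ring
        _ ≤ m * κ := mul_le_mul_of_nonpos_left (hκ_le z hz) hm
        _ = -|K| := div_mul_cancel₀ _ hκ.ne'
        _ ≤ v z := (neg_abs_le K).trans (hK z hz)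
    | succ j ih =>
      intro z hz
      rw [pow_succ, ← mul_assoc]
      exact hv.mul_cos_le_of_endpoints hab ha hb
        (mul_nonpos_of_nonpos_of_nonneg hm (pow_nonneg hq j)) ih hz
  have hlim : Filter.Tendsto (fun j : ℕ ↦ m * q ^ j * cos (x - (a + b) / 2)) Filter.atTop
      (nhds (m * 0 * cos (x - (a + b) / 2))) :=
    ((tendsto_pow_atTop_nhds_zero_of_lt_one hq (by linarith)).const_mul m).mul_const _
  simpa only [mul_zero, zero_mul] using le_of_tendsto' hlim fun j ↦ hbound j x hx

theorem sin_interpolation_le (hu : MidpointSinConcaveOn u (Icc a b)) (hab : b - a < π)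
    (hK : ∀ x ∈ Icc a b, K ≤ u x) (hx : x ∈ Icc a b) :
    u a * sin (b - x) + u b * sin (x - a) ≤ u x * sin (b - a) := by
  rcases (hx.1.trans hx.2).eq_or_lt with rfl | hlt
  · simp [le_antisymm hx.2 hx.1]
  have hS : 0 < sin (b - a) := sin_pos_of_pos_of_lt_pi (by linarith) hab
  set A := u b / sin (b - a)
  set B := -u a / sin (b - a)
  have hA : A * sin (b - a) = u b := div_mul_cancel₀ _ hS.ne'
  have hB : B * sin (b - a) = -u a := div_mul_cancel₀ _ hS.ne'
  have hsin_le (C t : ℝ) : C * sin t ≤ |C| :=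
    (le_abs_self _).trans <| by
      rw [abs_mul]
      exact mul_le_of_le_one_right (abs_nonneg C) (abs_sin_le_one t)
  have hdiff := ((hu.sub_const_mul_sin A a).sub_const_mul_sin B b).nonneg_of_endpoints hab
    (K := K - |A| - |B|)
    (fun t ht ↦ sub_le_sub (sub_le_sub (hK t ht) (hsin_le A _)) (hsin_le B _))
    (by rw [← neg_sub b a, sin_neg, sub_self, sin_zero]; linarith)
    (by rw [sub_self, sin_zero]; linarith) hx
  rw [← neg_sub b x, sin_neg] at hdiff
  linear_combination sin (b - a) * hdiff - sin (x - a) * hA + sin (b - x) * hB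

section MaxAtZero

variable (hu : MidpointSinConcaveOn u (Icc 0 τ)) (hu_nonneg : ∀ x ∈ Icc 0 τ, 0 ≤ u x)
include hu hu_nonneg

lemma zero_mul_sin_add_le (hx : 0 ≤ x) (hxy : x ≤ y) (hyτ : y ≤ τ) (hyπ : y < π) :
    u 0 * sin (y - x) + u y * sin x ≤ u x * sin y := by
  have hsub : Icc 0 y ⊆ Icc 0 τ := Icc_subset_Icc_right hyτ
  simpa only [sub_zero] using (hu.mono hsub).sin_interpolation_le (by linarith)
    (fun t ht ↦ hu_nonneg t (hsub ht)) ⟨hx, hxy⟩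

variable (hmax : IsMaxOn u (Icc 0 τ) 0)

lemma pos_of_lt (h0 : 0 < u 0) (hτ : τ < π) (hx : x ∈ Ico 0 τ) : 0 < u x := by
  have hsin : 0 < sin τ := sin_pos_of_pos_of_lt_pi (hx.1.trans_lt hx.2) hτ
  refine pos_of_mul_pos_left (b := sin τ) ?_ hsin.le
  calc 0 < u 0 * sin (τ - x) :=
        mul_pos h0 (sin_pos_of_pos_of_lt_pi (by linarith [hx.2]) (by linarith [hx.1]))
    _ ≤ u 0 * sin (τ - x) + u τ * sin x :=
        le_add_of_nonneg_right <| mul_nonneg (hu_nonneg τ ⟨hx.1.trans hx.2.le, le_rfl⟩)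
          (sin_nonneg_of_nonneg_of_le_pi hx.1 (hx.2.trans hτ).le)
    _ ≤ u x * sin τ := hu.zero_mul_sin_add_le hu_nonneg hx.1 hx.2.le le_rfl hτ

include hmax

-- Interpolating at `2 * d` and letting `d → 0` expresses that `u` does not increase at `0`.
lemma le_zero_mul_cos (hy : y ∈ Icc 0 τ) (hyπ : y < π) : u y ≤ u 0 * cos y := by
  rcases hy.1.eq_or_lt with rfl | hy0
  · simp
  have hnear : ∀ d ∈ Ioo 0 (y / 2), u y * cos d ≤ u 0 * cos (y - d) := by
    intro d ⟨hd0, hdy⟩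
    have hsin : 0 < sin d := sin_pos_of_pos_of_lt_pi hd0 (by linarith)
    have hinterp := hu.zero_mul_sin_add_le hu_nonneg (x := 2 * d) (by linarith) (by linarith)
      hy.2 hyπ
    have hle : u (2 * d) * sin y ≤ u 0 * sin y :=
      mul_le_mul_of_nonneg_right (hmax ⟨by linarith, by linarith [hy.2]⟩)
        (sin_nonneg_of_nonneg_of_le_pi hy.1 hyπ.le)
    have hdiff : sin y - sin (y - 2 * d) = 2 * sin d * cos (y - d) := by
      rw [sin_sub_sin]; ring_nf
    rw [sin_two_mul] at hinterp
    refine le_of_mul_le_mul_left ?_ (mul_pos two_pos hsin)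
    linear_combination hinterp + hle + u 0 * hdiff
  have hlim (g : ℝ → ℝ) (hg : Continuous g) :
      Filter.Tendsto g (nhdsWithin 0 (Ioi 0)) (nhds (g 0)) := hg.continuousWithinAt
  simpa using le_of_tendsto_of_tendsto (hlim (fun d ↦ u y * cos d) (by fun_prop))
    (hlim (fun d ↦ u 0 * cos (y - d)) (by fun_prop))
    (Filter.eventually_of_mem (Ioo_mem_nhdsGT (half_pos hy0)) hnear)

lemma le_pi_div_two (h0 : 0 < u 0) : τ ≤ π / 2 := by
  by_contra! hτ
  obtain ⟨y, hy, hy_lt⟩ := exists_between (lt_min hτ (half_lt_self pi_pos))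
  obtain ⟨hyτ, hyπ⟩ := lt_min_iff.1 hy_lt
  have hyI : y ∈ Icc 0 τ := ⟨by linarith [pi_pos], hyτ.le⟩
  have hcos : cos y < 0 := cos_neg_of_pi_div_two_lt_of_lt hy (by linarith)
  exact (mul_neg_of_pos_of_neg h0 hcos).not_ge <|
    (hu_nonneg y hyI).trans (hu.le_zero_mul_cos hu_nonneg hmax hyI hyπ)

lemma mul_cos_le_mul_cos (hτ : τ ≤ π / 2) (hx : 0 ≤ x) (hxy : x ≤ y) (hyτ : y ≤ τ) :
    u y * cos x ≤ u x * cos y := by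
  rcases (hx.trans hxy).eq_or_lt with rfl | hy
  · rw [le_antisymm hxy hx]
  have hsin : 0 < sin y := sin_pos_of_pos_of_lt_pi hy (by linarith)
  have hcos : 0 ≤ cos y := cos_nonneg_of_mem_Icc ⟨by linarith, by linarith⟩
  have hsin_sub : 0 ≤ sin (y - x) := sin_nonneg_of_nonneg_of_le_pi (by linarith) (by linarith)
  refine le_of_mul_le_mul_right ?_ hsin
  calc u y * cos x * sin y = u y * sin (y - x) + u y * sin x * cos y := by rw [sin_sub]; ring
    _ ≤ u 0 * cos y * sin (y - x) + u y * sin x * cos y := by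
        gcongr
        exact hu.le_zero_mul_cos hu_nonneg hmax ⟨hy.le, hyτ⟩ (by linarith)
    _ = (u 0 * sin (y - x) + u y * sin x) * cos y := by ring
    _ ≤ u x * sin y * cos y := by
        gcongr
        exact hu.zero_mul_sin_add_le hu_nonneg hx hxy hyτ (by linarith)
    _ = u x * cos y * sin y := by ring

lemma antitoneOn_div_cos (hτ : τ ≤ π / 2) : AntitoneOn (fun x ↦ u x / cos x) (Ico 0 τ) := by
  intro x hx y hy hxy
  have hcos {t : ℝ} (ht : t ∈ Ico 0 τ) : 0 < cos t :=
    cos_pos_of_mem_Ioo ⟨by linarith [pi_pos, ht.1], by linarith [ht.2]⟩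
  rw [div_le_div_iff₀ (hcos hy) (hcos hx)]
  exact hu.mul_cos_le_mul_cos hu_nonneg hmax hτ hx.1 hxy hy.2.le

lemma antitoneOn (hτ : τ ≤ π / 2) : AntitoneOn u (Icc 0 τ) := by
  intro x hx y hy hxy
  rcases hxy.eq_or_lt with rfl | hlt
  · exact le_rfl
  have hcos : 0 < cos x := cos_pos_of_mem_Ioo ⟨by linarith [pi_pos, hx.1], by linarith [hy.2]⟩
  refine le_of_mul_le_mul_right ?_ hcos
  calc u y * cos x ≤ u x * cos y := hu.mul_cos_le_mul_cos hu_nonneg hmax hτ hx.1 hxy hy.2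
    _ ≤ u x * cos x := mul_le_mul_of_nonneg_left
        (cos_le_cos_of_nonneg_of_le_pi hx.1 (by linarith [hy.2, pi_pos]) hxy) (hu_nonneg x hx)

end MaxAtZero

end MidpointSinConcaveOn

lemma isMaxOn_rpow_const {α : Type*} {f : α → ℝ} {s : Set α} {a : α} {p : ℝ}
    (hf : ∀ x ∈ s, 0 ≤ f x) (hmax : IsMaxOn f s a) (hp : 0 ≤ p) :
    IsMaxOn (fun x ↦ f x ^ p) s a :=
  fun x hx ↦ rpow_le_rpow (hf x hx) (hmax hx) hp

namespace SinConcaveOn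

variable {N τ x : ℝ} {f : ℝ → ℝ} {I : Set ℝ}

lemma midpointSinConcaveOn_rpow (hf : SinConcaveOn N f I) :
    MidpointSinConcaveOn (fun x ↦ f x ^ (1 / N)) I := by
  intro x hx y hy hxy
  have hcos : 0 < cos (|y - x| / 2) :=
    cos_pos_of_mem_Ioo ⟨by linarith [abs_nonneg (y - x), pi_pos], by linarith⟩
  have h := (div_le_iff₀ (mul_pos two_pos hcos)).1 (hf x hx y hy)
  rwa [← abs_two, ← abs_div, cos_abs, abs_two, mul_comm (f _ ^ _)] at h

variable (hN : 0 < N) (hf : SinConcaveOn N f (Icc 0 τ)) (hf_nonneg : ∀ x ∈ Icc 0 τ, 0 ≤ f x)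
include hN hf hf_nonneg

lemma pos_of_lt (h0 : 0 < f 0) (hτ : τ < π) (hx : x ∈ Ico 0 τ) : 0 < f x := by
  refine (hf_nonneg x (Ico_subset_Icc_self hx)).lt_of_ne' fun hfx ↦ ?_
  have hroot : 0 < f x ^ (1 / N) := hf.midpointSinConcaveOn_rpow.pos_of_lt
    (fun t ht ↦ rpow_nonneg (hf_nonneg t ht) _) (rpow_pos_of_pos h0 _) hτ hx
  rw [hfx, zero_rpow (one_div_pos.2 hN).ne'] at hroot
  exact hroot.false

variable (hmax : IsMaxOn f (Icc 0 τ) 0)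
include hmax

lemma le_pi_div_two (h0 : 0 < f 0) : τ ≤ π / 2 :=
  hf.midpointSinConcaveOn_rpow.le_pi_div_two (fun t ht ↦ rpow_nonneg (hf_nonneg t ht) _)
    (isMaxOn_rpow_const hf_nonneg hmax (one_div_pos.2 hN).le) (rpow_pos_of_pos h0 _)

lemma antitoneOn (hτ : τ ≤ π / 2) : AntitoneOn f (Icc 0 τ) := fun x hx y hy hxy ↦
  (rpow_le_rpow_iff (hf_nonneg y hy) (hf_nonneg x hx) (one_div_pos.2 hN)).1 <|
    hf.midpointSinConcaveOn_rpow.antitoneOn (fun t ht ↦ rpow_nonneg (hf_nonneg t ht) _)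
      (isMaxOn_rpow_const hf_nonneg hmax (one_div_pos.2 hN).le) hτ hx hy hxy

lemma antitoneOn_div_cos_rpow (hτ : τ ≤ π / 2) :
    AntitoneOn (fun x ↦ f x / cos x ^ N) (Ico 0 τ) := by
  have hcos {t : ℝ} (ht : t ∈ Ico 0 τ) : 0 ≤ cos t :=
    cos_nonneg_of_mem_Icc ⟨by linarith [pi_pos, ht.1], by linarith [ht.2]⟩
  have hroot_nonneg {t : ℝ} (ht : t ∈ Ico 0 τ) : 0 ≤ f t ^ (1 / N) :=
    rpow_nonneg (hf_nonneg t (Ico_subset_Icc_self ht)) _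
  have hquot {t : ℝ} (ht : t ∈ Ico 0 τ) :
      f t / cos t ^ N = (f t ^ (1 / N) / cos t) ^ N := by
    rw [div_rpow (hroot_nonneg ht) (hcos ht), one_div,
      rpow_inv_rpow (hf_nonneg t (Ico_subset_Icc_self ht)) hN.ne']
  have hanti := hf.midpointSinConcaveOn_rpow.antitoneOn_div_cos
    (fun t ht ↦ rpow_nonneg (hf_nonneg t ht) _)
    (isMaxOn_rpow_const hf_nonneg hmax (one_div_pos.2 hN).le) hτ
  intro x hx y hy hxy
  simp only [hquot hx, hquot hy]
  exact rpow_le_rpow (div_nonneg (hroot_nonneg hy) (hcos hy)) (hanti hx hy hxy) hN.le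

end SinConcaveOn

section RatioOfIntegrals

open MeasureTheory intervalIntegral

variable {F G : ℝ → ℝ} {a b c : ℝ}

lemma integral_mul_integral_le_of_antitoneOn_div (hab : a ≤ b) (hbc : b ≤ c)
    (hF : IntervalIntegrable F volume a c) (hG : IntervalIntegrable G volume a c)
    (hG_pos : ∀ t ∈ Ioo a c, 0 < G t) (hFG : AntitoneOn (fun t ↦ F t / G t) (Ioo a c)) :
    (∫ t in a..b, G t) * (∫ t in b..c, F t) ≤ (∫ t in a..b, F t) * ∫ t in b..c, G t := by
  have hb : b ∈ uIcc a c := mem_uIcc_of_le hab hbc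
  have hF₁ := hF.mono_set (uIcc_subset_uIcc_left hb)
  have hG₁ := hG.mono_set (uIcc_subset_uIcc_left hb)
  have hF₂ := hF.mono_set (uIcc_subset_uIcc_right hb)
  have hG₂ := hG.mono_set (uIcc_subset_uIcc_right hb)
  have hcross : ∀ s ∈ Ioo a b, ∀ t ∈ Ioo b c, G s * F t ≤ F s * G t := by
    intro s hs t ht
    have hsI : s ∈ Ioo a c := ⟨hs.1, hs.2.trans_le hbc⟩
    have htI : t ∈ Ioo a c := ⟨hab.trans_lt ht.1, ht.2⟩
    rw [mul_comm]
    exact (div_le_div_iff₀ (hG_pos t htI) (hG_pos s hsI)).1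
      (hFG hsI htI (hs.2.trans ht.1).le)
  simp only [← intervalIntegral.integral_mul_const]
  refine integral_mono_on_of_le_Ioo hab (hG₁.mul_const _) (hF₁.mul_const _) fun s hs ↦ ?_
  simp only [← intervalIntegral.integral_const_mul]
  exact integral_mono_on_of_le_Ioo hbc (hF₂.const_mul _) (hG₂.const_mul _) (hcross s hs)

theorem integral_div_integral_le_of_antitoneOn_div (hac : a < c) (hb : b ∈ Icc a c)
    (hF : IntervalIntegrable F volume a c) (hG : IntervalIntegrable G volume a c)
    (hF_pos : ∀ t ∈ Ioo a c, 0 < F t) (hG_pos : ∀ t ∈ Ioo a c, 0 < G t)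
    (hFG : AntitoneOn (fun t ↦ F t / G t) (Ioo a c)) :
    (∫ t in a..b, G t) / (∫ t in a..c, G t) ≤ (∫ t in a..b, F t) / ∫ t in a..c, F t := by
  have hb' : b ∈ uIcc a c := mem_uIcc_of_le hb.1 hb.2
  have hsplit {H : ℝ → ℝ} (hH : IntervalIntegrable H volume a c) :
      (∫ t in a..b, H t) + ∫ t in b..c, H t = ∫ t in a..c, H t :=
    integral_add_adjacent_intervals (hH.mono_set (uIcc_subset_uIcc_left hb'))
      (hH.mono_set (uIcc_subset_uIcc_right hb'))
  rw [div_le_div_iff₀ (intervalIntegral_pos_of_pos_on hG hG_pos hac)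
    (intervalIntegral_pos_of_pos_on hF hF_pos hac), ← hsplit hF, ← hsplit hG]
  linear_combination integral_mul_integral_le_of_antitoneOn_div hb.1 hb.2 hF hG hG_pos hFG

theorem integral_div_integral_le_of_antitoneOn_div_of_le {τ : ℝ} (haτ : a < τ) (hτc : τ ≤ c)
    (hb : b ∈ Icc a c) (hF : IntervalIntegrable F volume a τ)
    (hG : IntervalIntegrable G volume a c) (hF_pos : ∀ t ∈ Ioo a τ, 0 < F t)
    (hG_pos : ∀ t ∈ Ioo a c, 0 < G t) (hFG : AntitoneOn (fun t ↦ F t / G t) (Ioo a τ)) :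
    (∫ t in a..b, G t) / (∫ t in a..c, G t) ≤
      (∫ t in a..min b τ, F t) / ∫ t in a..τ, F t := by
  have hac : a < c := haτ.trans_le hτc
  have hG_nonneg : 0 ≤ᵐ[volume.restrict (Ioc a c)] G := by
    rw [← restrict_Ioo_eq_restrict_Ioc]
    exact ae_restrict_of_forall_mem measurableSet_Ioo fun t ht ↦ (hG_pos t ht).le
  rcases le_total τ b with hτb | hbτ
  · rw [min_eq_right hτb, div_self (intervalIntegral_pos_of_pos_on hF hF_pos haτ).ne']
    exact div_le_one_of_le₀ (integral_mono_interval le_rfl hb.1 hb.2 hG_nonneg hG)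
      (intervalIntegral_pos_of_pos_on hG hG_pos hac).le
  · have hG' := hG.mono_set (uIcc_subset_uIcc_left (mem_uIcc_of_le haτ.le hτc))
    have hG_pos' : ∀ t ∈ Ioo a τ, 0 < G t := fun t ht ↦ hG_pos t ⟨ht.1, ht.2.trans_le hτc⟩
    rw [min_eq_left hbτ]
    calc (∫ t in a..b, G t) / (∫ t in a..c, G t)
        ≤ (∫ t in a..b, G t) / (∫ t in a..τ, G t) := by
          gcongr
          · rw [integral_of_le hb.1]
            exact setIntegral_nonneg_of_ae_restrict <|
              ae_restrict_of_ae_restrict_of_subset (Ioc_subset_Ioc_right hb.2) hG_nonneg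
          · exact intervalIntegral_pos_of_pos_on hG' hG_pos' haτ
          · exact integral_mono_interval le_rfl haτ.le hτc hG_nonneg hG
      _ ≤ (∫ t in a..b, F t) / ∫ t in a..τ, F t :=
          integral_div_integral_le_of_antitoneOn_div haτ ⟨hb.1, hbτ⟩ hF hG' hF_pos hG_pos' hFG

lemma intervalIntegrable_antitoneOn_mul {f w : ℝ → ℝ} (hab : a ≤ b) (hf : AntitoneOn f (Icc a b))
    (hw : IntervalIntegrable w volume a b) :
    IntervalIntegrable (fun t ↦ f t * w t) volume a b := by
  rw [intervalIntegrable_iff_integrableOn_Icc_of_le hab] at hw ⊢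
  have hbound : ∀ t ∈ Icc a b, ‖f t‖ ≤ max |f b| |f a| := fun t ht ↦
    abs_le_max_abs_abs (hf ht (right_mem_Icc.2 hab) ht.2) (hf (left_mem_Icc.2 hab) ht ht.1)
  exact hw.bdd_mul (aemeasurable_restrict_of_antitoneOn measurableSet_Icc hf).aestronglyMeasurable
    (ae_restrict_of_forall_mem measurableSet_Icc hbound)

end RatioOfIntegrals

theorem stmt_1_general {N : ℝ} (hN : 0 < N) {τ : ℝ} (hτ : 0 < τ)
    {f : ℝ → ℝ} (hf_nonneg : ∀ x ∈ Icc (0 : ℝ) τ, 0 ≤ f x)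
    (hf_ne : ∃ x ∈ Icc (0 : ℝ) τ, f x ≠ 0)
    (hconc : SinConcaveOn N f (Icc 0 τ))
    (hmax : ∀ x ∈ Icc (0 : ℝ) τ, f x ≤ f 0)
    {w : ℝ → ℝ} (hw : IntervalIntegrable w MeasureTheory.volume 0 (π / 2))
    (hw_pos : ∀ t ∈ Ioo 0 (π / 2), 0 < w t) {ε : ℝ} (hε : 0 ≤ ε) (hεπ : ε ≤ π / 2) :
    (∫ t in (0 : ℝ)..(min ε τ), f t * w t) / (∫ t in (0 : ℝ)..τ, f t * w t)
      ≥ (∫ t in (0 : ℝ)..ε, Real.cos t ^ N * w t) /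
        (∫ t in (0 : ℝ)..(π / 2), Real.cos t ^ N * w t) := by
  obtain ⟨z, hz, hfz⟩ := hf_ne
  have h0 : 0 < f 0 := ((hf_nonneg z hz).lt_of_ne' hfz).trans_le (hmax z hz)
  have hτπ : τ ≤ π / 2 := hconc.le_pi_div_two hN hf_nonneg hmax h0
  have hcos : ∀ t ∈ Ioo 0 (π / 2), 0 < cos t := fun t ht ↦
    cos_pos_of_mem_Ioo ⟨by linarith [ht.1, pi_pos], ht.2⟩
  have hsub : Ioo 0 τ ⊆ Ioo 0 (π / 2) := Ioo_subset_Ioo_right hτπ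
  have hF : IntervalIntegrable (fun t ↦ f t * w t) MeasureTheory.volume 0 τ :=
    intervalIntegrable_antitoneOn_mul hτ.le (hconc.antitoneOn hN hf_nonneg hmax hτπ)
      (hw.mono_set (uIcc_subset_uIcc_left (mem_uIcc_of_le hτ.le hτπ)))
  have hG : IntervalIntegrable (fun t ↦ cos t ^ N * w t) MeasureTheory.volume 0 (π / 2) :=
    hw.continuousOn_mul (continuous_cos.rpow_const fun _ ↦ .inr hN.le).continuousOn
  have hanti : AntitoneOn (fun t ↦ f t * w t / (cos t ^ N * w t)) (Ioo 0 τ) :=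
    ((hconc.antitoneOn_div_cos_rpow hN hf_nonneg hmax hτπ).mono Ioo_subset_Ico_self).congr
      fun t ht ↦ (mul_div_mul_right _ _ (hw_pos t (hsub ht)).ne').symm
  exact integral_div_integral_le_of_antitoneOn_div_of_le hτ hτπ ⟨hε, hεπ⟩ hF hG
    (fun t ht ↦ mul_pos (hconc.pos_of_lt hN hf_nonneg h0 (by linarith [pi_pos])
      (Ioo_subset_Ico_self ht)) (hw_pos t (hsub ht)))
    (fun t ht ↦ mul_pos (rpow_pos_of_pos (hcos t ht) N) (hw_pos t ht)) hanti

theorem stmt_1 (n : ℕ) (hn : 1 ≤ n) (τ : ℝ) (hτ : 0 < τ) (hτπ : τ ≤ π)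
    (f : ℝ → ℝ) (hf0 : ∀ x ∈ Icc (0 : ℝ) τ, 0 ≤ f x)
    (hfne : ∃ x ∈ Icc (0 : ℝ) τ, f x ≠ 0)
    (hconc : SinConcaveOn n f (Icc 0 τ))
    (hmax : ∀ x ∈ Icc (0 : ℝ) τ, f x ≤ f 0)
    (k : ℝ) (hk : 0 ≤ k) (ε : ℝ) (hε : 0 < ε) (hεπ : ε ≤ π / 2) :
    (∫ t in (0 : ℝ)..(min ε τ), f t * Real.sin t ^ k) /
        (∫ t in (0 : ℝ)..τ, f t * Real.sin t ^ k)
      ≥ (∫ t in (0 : ℝ)..ε, Real.cos t ^ n * Real.sin t ^ k) /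
        (∫ t in (0 : ℝ)..(π / 2), Real.cos t ^ n * Real.sin t ^ k) := by
  simpa only [rpow_natCast] using stmt_1_general (Nat.cast_pos.2 hn) hτ hf0 hfne hconc hmax
    ((continuous_sin.rpow_const fun _ ↦ .inr hk).intervalIntegrable 0 (π / 2))
    (fun t ht ↦ rpow_pos_of_pos (sin_pos_of_mem_Ioo ⟨ht.1, by linarith [ht.2, pi_pos]⟩) k) hε.le hεπ
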